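/- arXiv:1111.0632 — 4 statements merged into one kernel-verified Lean document; each statement's English description precedes it below -/
import Mathlib

section
/- Let n ≥ 1 be an integer. Define abelian groups Y_n := (ℤ × ℤⁿ)/⟨(0, 1⃗)⟩, Y_1 := (ℤ × ℤⁿ)/⟨(2(1−n), 1⃗)⟩ and Y_MF := (ℤ × ℤ)/⟨(−2, n)⟩, with structure homomorphisms f_n : ℤ → Y_n, f_1 : ℤ → Y_1 and f_MF : ℤ → Y_MF each sending j to the class of (j, 0). Then the assignments q₁ : Y_n → ℤ, [(j,y)] ↦ j; p₁ : Y_n → Y_1, [(j,y)] ↦ [(j + 2(1−n)|y|, n·y)]; q₂ : Y_1 → Y_MF, [(j,y)] ↦ [(j + 2|y|, −|y|)]; and p₂ := f_MF : ℤ → Y_MF, define well-defined group homomorphisms such that: p₁ ∘ f_n = f_1, q₁ ∘ f_n = id_ℤ, q₂ ∘ f_1 = f_MF; p₁ and p₂ are injective; the square commutes, i.e. q₂ ∘ p₁ = p₂ ∘ q₁; and each of the four maps is compatible with the parity homomorphisms sending [(j,y)] ↦ j mod 2 (resp. j ↦ j mod 2 on ℤ). -/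
/-!
All six maps are induced from homomorphisms on `ℤ × ℤⁿ` or `ℤ × ℤ` that send the single
generating relation to zero: `(0, 1⃗)` goes to `n • (2(1-n), 1⃗)` under `p₁`, and
`(2(1-n), 1⃗)` goes to `-(-2, n)` under `q₂`. The square commutes because the two
composites differ on `(j, y)` by `|y| • (-2, n)`.

For injectivity of `p₁`, suppose `(j + 2(1-n)|y|, n y) = k (2(1-n), 1⃗)`. Since `n ≥ 1`, all
entries of `y` equal one integer `c` and `k = n c = |y|`, so `j = 0` and `(j, y) = c (0, 1⃗)`.
-/

noncomputable section

/-- The grading group `Y_n = (ℤ × ℤⁿ)/⟨(0, 1⃗)⟩` of the grading datum `G^n_n`. -/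
abbrev YnGrp (n : ℕ) : Type :=
  (ℤ × (Fin n → ℤ)) ⧸ AddSubgroup.zmultiples (((0 : ℤ), fun _ : Fin n => (1 : ℤ)))

/-- The grading group `Y_1 = (ℤ × ℤⁿ)/⟨(2(1−n), 1⃗)⟩` of the grading datum `G^n_1`. -/
abbrev Y1Grp (n : ℕ) : Type :=
  (ℤ × (Fin n → ℤ)) ⧸ AddSubgroup.zmultiples ((2 * (1 - (n : ℤ)), fun _ : Fin n => (1 : ℤ)))

/-- The grading group `Y_MF = (ℤ × ℤ)/⟨(−2, n)⟩` of the grading datum `G_{MF(n)}`. -/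
abbrev YMFGrp (n : ℕ) : Type :=
  (ℤ × ℤ) ⧸ AddSubgroup.zmultiples ((-2 : ℤ), (n : ℤ))

/-- The structure morphism `f_n : ℤ → Y_n`, `j ↦ [(j, 0)]`. -/
def fnHom (n : ℕ) : ℤ →+ YnGrp n :=
  (QuotientAddGroup.mk' _).comp (AddMonoidHom.inl ℤ (Fin n → ℤ))

/-- The structure morphism `f_1 : ℤ → Y_1`, `j ↦ [(j, 0)]`. -/
def f1Hom (n : ℕ) : ℤ →+ Y1Grp n :=
  (QuotientAddGroup.mk' _).comp (AddMonoidHom.inl ℤ (Fin n → ℤ))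

/-- The structure morphism `f_MF : ℤ → Y_MF`, `j ↦ [(j, 0)]`. -/
def fMFHom (n : ℕ) : ℤ →+ YMFGrp n :=
  (QuotientAddGroup.mk' _).comp (AddMonoidHom.inl ℤ ℤ)

/-- A homomorphism killing `v` factors through the quotient by the subgroup generated
by `v`. -/
lemma exists_lift_zmultiples {A B : Type*} [AddCommGroup A] [AddCommGroup B] (v : A)
    (φ : A →+ B) (h : φ v = 0) :
    ∃ ψ : (A ⧸ AddSubgroup.zmultiples v) →+ B, ∀ a, ψ (QuotientAddGroup.mk a) = φ a :=
  ⟨QuotientAddGroup.lift _ φ (by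
    rw [AddSubgroup.zmultiples_le]
    exact h), fun _ => rfl⟩

lemma mk_eq_mk_of_sub_eq_zsmul {A : Type*} [AddCommGroup A] {v a b : A} (k : ℤ)
    (h : b - a = k • v) :
    (QuotientAddGroup.mk a : A ⧸ AddSubgroup.zmultiples v) = QuotientAddGroup.mk b := by
  rw [QuotientAddGroup.eq, AddSubgroup.mem_zmultiples_iff]
  exact ⟨k, by rw [← h]; abel⟩

/-- The commutative square of grading data of Lemma `squaregrad`, relating `G^n_n` and
`G^n_1` to `G_ℤ` and `G_{MF(n)}`, with injective vertical morphisms `p₁, p₂` and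
compatibility with the parity (sign) morphisms. -/
theorem stmt0 (n : ℕ) (hn : 1 ≤ n) :
    ∃ (q₁ : YnGrp n →+ ℤ) (p₁ : YnGrp n →+ Y1Grp n) (q₂ : Y1Grp n →+ YMFGrp n)
      (σn : YnGrp n →+ ZMod 2) (σ1 : Y1Grp n →+ ZMod 2) (σMF : YMFGrp n →+ ZMod 2),
      -- the defining formulas (well-definedness)
      (∀ (j : ℤ) (y : Fin n → ℤ), q₁ (QuotientAddGroup.mk (j, y)) = j) ∧
      (∀ (j : ℤ) (y : Fin n → ℤ), p₁ (QuotientAddGroup.mk (j, y)) =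
        QuotientAddGroup.mk (j + 2 * (1 - (n : ℤ)) * (∑ i, y i), fun i => (n : ℤ) * y i)) ∧
      (∀ (j : ℤ) (y : Fin n → ℤ), q₂ (QuotientAddGroup.mk (j, y)) =
        QuotientAddGroup.mk (j + 2 * (∑ i, y i), -(∑ i, y i))) ∧
      -- compatibility with the structure morphisms from ℤ
      p₁.comp (fnHom n) = f1Hom n ∧
      q₁.comp (fnHom n) = AddMonoidHom.id ℤ ∧
      q₂.comp (f1Hom n) = fMFHom n ∧
      -- injectivity of p₁ and p₂ = f_MF
      Function.Injective p₁ ∧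
      Function.Injective (fMFHom n) ∧
      -- the square commutes
      q₂.comp p₁ = (fMFHom n).comp q₁ ∧
      -- the parity morphisms and their compatibility with the four maps
      (∀ (j : ℤ) (y : Fin n → ℤ), σn (QuotientAddGroup.mk (j, y)) = (j : ZMod 2)) ∧
      (∀ (j : ℤ) (y : Fin n → ℤ), σ1 (QuotientAddGroup.mk (j, y)) = (j : ZMod 2)) ∧
      (∀ (j m : ℤ), σMF (QuotientAddGroup.mk (j, m)) = (j : ZMod 2)) ∧
      σ1.comp p₁ = σn ∧
      (Int.castAddHom (ZMod 2)).comp q₁ = σn ∧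
      σMF.comp q₂ = σ1 ∧
      σMF.comp (fMFHom n) = Int.castAddHom (ZMod 2) := by
  have hn0 : (n : ℤ) ≠ 0 := by exact_mod_cast (by omega : n ≠ 0)
  have two : (2 : ZMod 2) = 0 := rfl
  obtain ⟨q₁, hq₁⟩ : ∃ q₁ : YnGrp n →+ ℤ, ∀ a, q₁ (QuotientAddGroup.mk a) = a.1 :=
    exists_lift_zmultiples _ (AddMonoidHom.fst ℤ (Fin n → ℤ)) rfl
  obtain ⟨p₁, hp₁⟩ : ∃ p₁ : YnGrp n →+ Y1Grp n, ∀ a, p₁ (QuotientAddGroup.mk a) =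
      QuotientAddGroup.mk (a.1 + 2 * (1 - (n : ℤ)) * (∑ i, a.2 i),
        fun i => (n : ℤ) * a.2 i) := by
    refine exists_lift_zmultiples _ ((QuotientAddGroup.mk' _).comp (AddMonoidHom.mk'
      (fun a : ℤ × (Fin n → ℤ) => (a.1 + 2 * (1 - (n : ℤ)) * (∑ i, a.2 i),
        fun i => (n : ℤ) * a.2 i)) ?_)) ?_
    · intro a b
      ext i
      · simp [Finset.sum_add_distrib]; ring
      · simp [mul_add]
    · refine mk_eq_mk_of_sub_eq_zsmul (b := 0) (-(n : ℤ)) ?_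
      ext i
      · simp; ring
      · simp
  obtain ⟨q₂, hq₂⟩ : ∃ q₂ : Y1Grp n →+ YMFGrp n, ∀ a, q₂ (QuotientAddGroup.mk a) =
      QuotientAddGroup.mk (a.1 + 2 * (∑ i, a.2 i), -(∑ i, a.2 i)) := by
    refine exists_lift_zmultiples _ ((QuotientAddGroup.mk' _).comp (AddMonoidHom.mk'
      (fun a : ℤ × (Fin n → ℤ) => (a.1 + 2 * (∑ i, a.2 i), -(∑ i, a.2 i))) ?_)) ?_
    · intro a b
      ext
      · simp [Finset.sum_add_distrib]; ring
      · simp [Finset.sum_add_distrib]; ring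
    · refine mk_eq_mk_of_sub_eq_zsmul (b := 0) 1 ?_
      ext
      · simp; ring
      · simp
  obtain ⟨σn, hσn⟩ : ∃ σ : YnGrp n →+ ZMod 2, ∀ a,
      σ (QuotientAddGroup.mk a) = (a.1 : ZMod 2) :=
    exists_lift_zmultiples _ ((Int.castAddHom (ZMod 2)).comp (AddMonoidHom.fst ℤ (Fin n → ℤ)))
      (by simp)
  obtain ⟨σ1, hσ1⟩ : ∃ σ : Y1Grp n →+ ZMod 2, ∀ a,
      σ (QuotientAddGroup.mk a) = (a.1 : ZMod 2) :=
    exists_lift_zmultiples _ ((Int.castAddHom (ZMod 2)).comp (AddMonoidHom.fst ℤ (Fin n → ℤ)))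
      (by simp [two])
  obtain ⟨σMF, hσMF⟩ : ∃ σ : YMFGrp n →+ ZMod 2, ∀ a,
      σ (QuotientAddGroup.mk a) = (a.1 : ZMod 2) :=
    exists_lift_zmultiples _ ((Int.castAddHom (ZMod 2)).comp (AddMonoidHom.fst ℤ ℤ))
      (by simp [two])
  have hfn : ∀ j, fnHom n j = QuotientAddGroup.mk (j, 0) := fun _ => rfl
  have hf1 : ∀ j, f1Hom n j = QuotientAddGroup.mk (j, 0) := fun _ => rfl
  have hfMF : ∀ j, fMFHom n j = QuotientAddGroup.mk (j, 0) := fun _ => rfl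
  refine ⟨q₁, p₁, q₂, σn, σ1, σMF, fun j y => hq₁ _, fun j y => hp₁ _, fun j y => hq₂ _,
    ?_, ?_, ?_, ?_, ?_, ?_, fun j y => hσn _, fun j y => hσ1 _, fun j m => hσMF _,
    ?_, ?_, ?_, ?_⟩
  · refine AddMonoidHom.ext fun j => ?_
    rw [AddMonoidHom.comp_apply, hfn, hp₁, hf1]
    congr 1
    ext i <;> simp
  · refine AddMonoidHom.ext fun j => ?_
    rw [AddMonoidHom.comp_apply, hfn, hq₁, AddMonoidHom.id_apply]
  · refine AddMonoidHom.ext fun j => ?_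
    rw [AddMonoidHom.comp_apply, hf1, hq₂, hfMF]
    congr 1
    ext <;> simp
  · rw [injective_iff_map_eq_zero]
    intro a
    obtain ⟨⟨j, y⟩, rfl⟩ := QuotientAddGroup.mk_surjective a
    rw [hp₁, QuotientAddGroup.eq_zero_iff, QuotientAddGroup.eq_zero_iff,
      AddSubgroup.mem_zmultiples_iff, AddSubgroup.mem_zmultiples_iff]
    rintro ⟨k, hk⟩
    have hk1 : k * (2 * (1 - (n : ℤ))) = j + 2 * (1 - (n : ℤ)) * ∑ i, y i := by
      simpa using congrArg Prod.fst hk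
    have hk2 : ∀ i, k = n * y i := fun i => by
      simpa using congrFun (congrArg Prod.snd hk) i
    -- `n ≥ 1` provides a coordinate to read the common value of `y` from.
    let i₀ : Fin n := ⟨0, hn⟩
    have hy : ∀ i, y i = y i₀ := fun i =>
      mul_left_cancel₀ hn0 ((hk2 i).symm.trans (hk2 i₀))
    have hsum : ∑ i, y i = k := by
      rw [Finset.sum_congr rfl fun i _ => hy i, hk2 i₀]
      simp
    have hj : j = 0 := by
      rw [hsum] at hk1
      linarith
    refine ⟨y i₀, ?_⟩
    ext i
    · simp [hj]
    · simp [hy i]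
  · rw [injective_iff_map_eq_zero]
    intro j hj
    rw [hfMF, QuotientAddGroup.eq_zero_iff, AddSubgroup.mem_zmultiples_iff] at hj
    obtain ⟨k, hk⟩ := hj
    have hk1 : k * (-2) = j := by simpa using congrArg Prod.fst hk
    have hk2 : k * (n : ℤ) = 0 := by simpa using congrArg Prod.snd hk
    have hk0 : k = 0 := (mul_eq_zero.mp hk2).resolve_right hn0
    rw [← hk1, hk0, zero_mul]
  · refine AddMonoidHom.ext fun a => ?_
    obtain ⟨⟨j, y⟩, rfl⟩ := QuotientAddGroup.mk_surjective a
    rw [AddMonoidHom.comp_apply, AddMonoidHom.comp_apply, hp₁, hq₂, hq₁, hfMF]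
    refine mk_eq_mk_of_sub_eq_zsmul (∑ i, y i) ?_
    ext
    · simp [← Finset.mul_sum]; ring
    · simp [← Finset.mul_sum]; ring
  · refine AddMonoidHom.ext fun a => ?_
    obtain ⟨⟨j, y⟩, rfl⟩ := QuotientAddGroup.mk_surjective a
    rw [AddMonoidHom.comp_apply, hp₁, hσ1, hσn]
    simp [two]
  · refine AddMonoidHom.ext fun a => ?_
    obtain ⟨⟨j, y⟩, rfl⟩ := QuotientAddGroup.mk_surjective a
    rw [AddMonoidHom.comp_apply, hq₁, hσn]
    rfl
  · refine AddMonoidHom.ext fun a => ?_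
    obtain ⟨⟨j, y⟩, rfl⟩ := QuotientAddGroup.mk_surjective a
    rw [AddMonoidHom.comp_apply, hq₂, hσMF, hσ1]
    simp [two]
  · refine AddMonoidHom.ext fun j => ?_
    rw [AddMonoidHom.comp_apply, hfMF, hσMF]
    rfl
end
end

section
/- Let Y₁, Y, Y₂ be abelian groups and f₁ : ℤ → Y₁, f : ℤ → Y, f₂ : ℤ → Y₂ injective group homomorphisms. Let p₁ : Y₁ → Y, q₁ : Y₁ → ℤ and q₂ : Y → Y₂ be group homomorphisms satisfying p₁ ∘ f₁ = f, q₁ ∘ f₁ = id_ℤ, q₂ ∘ f = f₂ and q₂ ∘ p₁ = f₂ ∘ q₁, with p₁ injective. Let k be a field, (V_y)_{y∈Y} a family of k-vector spaces, and j ∈ ℤ. Then, inside the direct sum ⨁_{y∈Y} V_y, the subspace ⨁ of those V_y with q₂(y) = f₂(j) and such that the class of y in Y/f(ℤ) lies in the image of the map Y₁/f₁(ℤ) → Y/f(ℤ) induced by p₁, is equal to the subspace ⨁_{y₁ ∈ Y₁, q₁(y₁) = j} V_{p₁(y₁)}. In particular, for any y ∈ Y one has y ∈ p₁(Y₁) if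 and only if the class of y in Y/f(ℤ) lies in the image of Y₁/f₁(ℤ), and if y = p₁(y₁) with q₂(y) = f₂(j) then q₁(y₁) = j. -/
/-!
The two subspaces are sums of the same summands `V y`. Since `f = p₁ ∘ f₁`, the subgroup `f(ℤ)`
lies in `p₁(Y₁)`, so `p₁(Y₁)` is a union of cosets of `f(ℤ)` and membership in it can be tested
in `Y/f(ℤ)`. On `p₁(Y₁)` the relation `q₂ ∘ p₁ = f₂ ∘ q₁` and the injectivity of `f₂` turn the
condition `q₂ y = f₂ j` into `q₁ y₁ = j`.
-/

open DirectSum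

/-- Lemma `gradsquare`: given a commutative square of exact grading data with injective
vertical morphisms, and a `Y`-graded vector space `V = ⨁_{y} V_y`, the part of `V` in
`ℤ`-degree `j` (for the pushforward along `q₂`, pulled back along `p₂ = f₂`) whose
`Y/f(ℤ)`-class lies in the image of `Y₁/f₁(ℤ)` coincides with the degree-`j` part of
`q₁_* p₁^* V`. -/
theorem stmt1 (Y₁ Y Y₂ : Type*) [AddCommGroup Y₁] [AddCommGroup Y] [AddCommGroup Y₂]
    [DecidableEq Y]
    (f₁ : ℤ →+ Y₁) (f : ℤ →+ Y) (f₂ : ℤ →+ Y₂)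
    (hf₁ : Function.Injective f₁) (hf : Function.Injective f) (hf₂ : Function.Injective f₂)
    (p₁ : Y₁ →+ Y) (q₁ : Y₁ →+ ℤ) (q₂ : Y →+ Y₂)
    (hpf : p₁.comp f₁ = f) (hqf : q₁.comp f₁ = AddMonoidHom.id ℤ)
    (hq₂f : q₂.comp f = f₂) (hsq : q₂.comp p₁ = f₂.comp q₁)
    (hp₁ : Function.Injective p₁)
    (k : Type*) [Field k] (V : Y → Type*) [∀ y, AddCommGroup (V y)] [∀ y, Module k (V y)]
    (j : ℤ) :
    (⨆ y ∈ {y : Y | q₂ y = f₂ j ∧ ∃ y₁ : Y₁,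
        (QuotientAddGroup.mk (p₁ y₁) : Y ⧸ f.range) = QuotientAddGroup.mk y},
      LinearMap.range (DirectSum.lof k Y V y)) =
    (⨆ y ∈ {y : Y | ∃ y₁ : Y₁, q₁ y₁ = j ∧ p₁ y₁ = y},
      LinearMap.range (DirectSum.lof k Y V y)) ∧
    (∀ y : Y, (∃ y₁ : Y₁, p₁ y₁ = y) ↔
      ∃ y₁ : Y₁, (QuotientAddGroup.mk (p₁ y₁) : Y ⧸ f.range) = QuotientAddGroup.mk y) ∧
    (∀ y₁ : Y₁, q₂ (p₁ y₁) = f₂ j → q₁ y₁ = j) := by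
  have hsq' : ∀ y₁, q₂ (p₁ y₁) = f₂ (q₁ y₁) := fun y₁ => DFunLike.congr_fun hsq y₁
  have hpf' : ∀ n, p₁ (f₁ n) = f n := fun n => DFunLike.congr_fun hpf n
  have hmem : ∀ y : Y, (∃ y₁ : Y₁, p₁ y₁ = y) ↔
      ∃ y₁ : Y₁, (QuotientAddGroup.mk (p₁ y₁) : Y ⧸ f.range) = QuotientAddGroup.mk y := by
    intro y
    constructor
    · rintro ⟨y₁, rfl⟩
      exact ⟨y₁, rfl⟩
    · rintro ⟨y₁, h⟩
      obtain ⟨n, hn⟩ := QuotientAddGroup.eq.1 h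
      -- `y` differs from `p₁ y₁` by `f n = p₁ (f₁ n)`.
      exact ⟨y₁ + f₁ n, by rw [map_add, hpf', hn, add_neg_cancel_left]⟩
  have hdeg : ∀ y₁ : Y₁, q₂ (p₁ y₁) = f₂ j → q₁ y₁ = j := fun y₁ h =>
    hf₂ ((hsq' y₁).symm.trans h)
  refine ⟨?_, hmem, hdeg⟩
  -- Both sides are spanned by the summands over the same set of degrees.
  refine iSup_congr fun y => iSup_congr_Prop ?_ fun _ => rfl
  simp only [Set.mem_ofPred_eq, ← hmem]
  constructor
  · rintro ⟨hy, y₁, rfl⟩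
    exact ⟨y₁, hdeg y₁ hy, rfl⟩
  · rintro ⟨y₁, rfl, rfl⟩
    exact ⟨hsq' y₁, y₁, rfl⟩
end

section
/- Let n ≥ 1 and a ≥ 1 be integers. Suppose b, c ∈ ℕⁿ, K ⊆ {1,…,n} and q, t ∈ ℤ satisfy: y_K + a·c − b = q·1⃗ in ℤⁿ, t = (n−2)·q + (2−a)·|c|, |b| + t = 2, and |c| ≥ 2. Then c_k ≥ 1 for every k ∈ {1,…,n}, i.e. c ≥ 1⃗ componentwise. -/
/-!
Summing the identity `y_K + a c - b = q 1⃗` over all coordinates gives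
`|K| + a |c| - |b| = n q`; together with the two degree conditions this yields
`|K| = 2 + 2 q - 2 |c| ≤ 2 q - 2`. If `c k = 0`, the `k`-th coordinate gives `q ≤ (y_K)_k ≤ 1`,
hence `|K| ≤ 0`, so `(y_K)_k = 0` and `q ≤ 0`, which forces `|K| ≤ -2`: a contradiction.
-/

/-- The indicator vector `y_K ∈ ℤⁿ` of a subset `K ⊆ {1,…,n}`. -/
def yvec {n : ℕ} (K : Finset (Fin n)) : Fin n → ℤ := fun i => if i ∈ K then 1 else 0

/-- Lemma `j2`: a generator `r^c u^b θ^K` of the truncated Hochschild cohomology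
`THH²` with order `|c| ≥ 2` satisfies `c ≥ 1⃗` componentwise. -/
theorem stmt7 (n : ℕ) (hn : 1 ≤ n) (a : ℤ) (ha : 1 ≤ a)
    (b c : Fin n → ℕ) (K : Finset (Fin n)) (q t : ℤ)
    (h1 : ∀ i : Fin n, yvec K i + a * (c i : ℤ) - (b i : ℤ) = q)
    (h2 : t = ((n : ℤ) - 2) * q + (2 - a) * (∑ i, (c i : ℤ)))
    (h3 : (∑ i, (b i : ℤ)) + t = 2)
    (h4 : 2 ≤ ∑ i, c i) :
    ∀ k : Fin n, 1 ≤ c k := by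
  intro k
  by_contra hk
  have hck : c k = 0 := by omega
  have hy0 : ∀ i, 0 ≤ yvec K i := fun i => by unfold yvec; split_ifs <;> norm_num
  have hy1 : yvec K k ≤ 1 := by unfold yvec; split_ifs <;> norm_num
  have hyS : yvec K k ≤ ∑ i, yvec K i :=
    Finset.single_le_sum (fun i _ => hy0 i) (Finset.mem_univ k)
  have hsum : (∑ i, yvec K i) + a * (∑ i, (c i : ℤ)) - ∑ i, (b i : ℤ) = n * q := by
    rw [Finset.mul_sum, ← Finset.sum_add_distrib, ← Finset.sum_sub_distrib,
      Finset.sum_congr rfl fun i _ => h1 i]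
    simp
  have hC : (2 : ℤ) ≤ ∑ i, (c i : ℤ) := by exact_mod_cast h4
  have hS : ∑ i, yvec K i = 2 + 2 * q - 2 * ∑ i, (c i : ℤ) := by linarith
  have hqk := h1 k
  rw [hck] at hqk
  push_cast at hqk
  have := hy0 k
  omega
end

section
/- Let k be a field, n ≥ 1 an integer, and a, b ∈ k with a ≠ 0, n·b ≠ 0 in k, and a^n ≠ (−n·b)^n. Set w := a·u₁⋯u_n + b·(u₁^n + ⋯ + u_n^n) ∈ k[u₁,…,u_n] and let J(w) be its Jacobian ideal. Then (u₁⋯u_n)^{n−1} ∈ J(w), and u_j^{n(n−1)} ∈ J(w) for every j ∈ {1,…,n}; consequently the quotient ring k[u₁,…,u_n]/J(w) is a finite-dimensional k-vector space, i.e. w has an isolated singularity at the origin. -/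
/-!
In the quotient by `J(w)`, write `x_j` for the class of `u_j`, `P = x₁⋯x_n` and `c = -n·b`. The
relations `∂w/∂u_j = 0` read `a·∏_{i≠j} x_i = c·x_j^{n-1}`. Multiplying them over all `j` gives
`a^n·P^{n-1} = c^n·P^{n-1}` (`prod_prod_erase`), hence `P^{n-1} = 0` because `a^n - c^n` is a unit.
Multiplying the `j`-th relation by `x_j` gives `a·P = c·x_j^n`, and the `(n-1)`-st power of this
yields `x_j^{n(n-1)} = 0`. The Jacobian ring is thus generated by finitely many integral elements,
so it is a finite `k`-module.
-/

open MvPolynomial in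
lemma pderiv_superpotential {k : Type*} [Field k] {n : ℕ} (a b : k) (j : Fin n) :
    pderiv j (C a * ∏ i, X i + C b * ∑ i, X i ^ n : MvPolynomial (Fin n) k) =
      C a * ∏ i ∈ Finset.univ.erase j, X i + C ((n : k) * b) * X j ^ (n - 1) := by
  have h1 : pderiv j (∏ i, X i : MvPolynomial (Fin n) k) = ∏ i ∈ Finset.univ.erase j, X i := by
    have h0 : pderiv j (∏ i ∈ Finset.univ.erase j, X i : MvPolynomial (Fin n) k) = 0 := by
      refine Finset.prod_induction (M := MvPolynomial (Fin n) k) _ (fun p => pderiv j p = 0)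
        (fun p q hp hq => by simp [Derivation.leibniz, hp, hq]) (by simp) fun i hi => ?_
      exact pderiv_X_of_ne (Finset.ne_of_mem_erase hi)
    rw [← Finset.mul_prod_erase _ _ (Finset.mem_univ j), Derivation.leibniz, h0]
    simp
  have h2 : pderiv j (∑ i, X i ^ n : MvPolynomial (Fin n) k) = C (n : k) * X j ^ (n - 1) := by
    rw [map_sum, Finset.sum_eq_single j]
    · simp
    · intro i _ hi
      simp [pderiv_X_of_ne hi]
    · simp
  rw [map_add, pderiv_C_mul, pderiv_C_mul, h1, h2, C_mul]
  ring

lemma prod_prod_erase {R : Type*} [CommMonoid R] {n : ℕ} (x : Fin n → R) :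
    ∏ j, ∏ i ∈ Finset.univ.erase j, x i = (∏ i, x i) ^ (n - 1) := by
  rw [Finset.prod_comm' (t' := Finset.univ) (s' := fun i => Finset.univ.erase i)
    (by simp [ne_comm])]
  simp [Finset.prod_const, Finset.card_erase_of_mem, Finset.prod_pow]

/-- The Jacobian relations alone, in an arbitrary `k`-algebra, force the required nilpotency. -/
lemma nilpotent_of_relations {k R : Type*} [Field k] [CommRing R] [Algebra k R] {n : ℕ}
    (hn : 1 ≤ n) {a d : k} (hd : d ≠ 0) (had : a ^ n ≠ (-d) ^ n) (x : Fin n → R)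
    (hrel : ∀ j, algebraMap k R a * ∏ i ∈ Finset.univ.erase j, x i +
      algebraMap k R d * x j ^ (n - 1) = 0) :
    (∏ i, x i) ^ (n - 1) = 0 ∧ ∀ j, x j ^ (n * (n - 1)) = 0 := by
  obtain ⟨c, rfl⟩ : ∃ c, d = -c := ⟨-d, (neg_neg d).symm⟩
  rw [neg_neg] at had
  have hx (j : Fin n) : a • ∏ i ∈ Finset.univ.erase j, x i = c • x j ^ (n - 1) := by
    have h := hrel j
    rwa [map_neg, neg_mul, ← sub_eq_add_neg, sub_eq_zero, ← Algebra.smul_def,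
      ← Algebra.smul_def] at h
  have hP : (∏ i, x i) ^ (n - 1) = 0 := by
    have h : a ^ n • (∏ i, x i) ^ (n - 1) = c ^ n • (∏ i, x i) ^ (n - 1) := by
      have := Finset.prod_congr rfl fun j (_ : j ∈ Finset.univ) => hx j
      simpa [Algebra.smul_def, Finset.prod_mul_distrib, prod_prod_erase, Finset.prod_pow] using this
    rw [← sub_eq_zero, ← sub_smul] at h
    exact (smul_eq_zero_iff_right (sub_ne_zero.2 had)).1 h
  refine ⟨hP, fun j => ?_⟩
  have h : c • x j ^ n = a • ∏ i, x i := by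
    rw [← Finset.mul_prod_erase _ _ (Finset.mem_univ j), ← mul_smul_comm, hx j, mul_smul_comm,
      mul_pow_sub_one (by omega)]
  have h' := congrArg (· ^ (n - 1)) h
  simp only [smul_pow, hP, smul_zero, ← pow_mul] at h'
  exact (smul_eq_zero_iff_right (pow_ne_zero _ (neg_ne_zero.1 hd))).1 h'

open MvPolynomial in
lemma finite_quotient_of_X_pow_mem {k : Type*} [Field k] {n : ℕ}
    (J : Ideal (MvPolynomial (Fin n) k)) (m : ℕ) (h : ∀ j, (X j) ^ m ∈ J) :
    Module.Finite k (MvPolynomial (Fin n) k ⧸ J) := by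
  have : Algebra.IsIntegral k (MvPolynomial (Fin n) k ⧸ J) := by
    refine ⟨fun y => ?_⟩
    obtain ⟨p, rfl⟩ := Ideal.Quotient.mk_surjective y
    induction p using MvPolynomial.induction_on with
    | C r => exact isIntegral_algebraMap (R := k) (x := r)
    | add p q hp hq => rw [map_add]; exact hp.add hq
    | mul_X p i hp =>
      rw [map_mul]
      refine hp.mul ⟨Polynomial.X ^ m, Polynomial.monic_X_pow m, ?_⟩
      rw [Polynomial.eval₂_X_pow, ← map_pow]
      exact Ideal.Quotient.eq_zero_iff_mem.2 (h i)
  exact Algebra.IsIntegral.finite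


/-- The isolated-singularity computation from the proof of Lemma `hhtypea`: for
`w = a·u₁⋯u_n + b·(u₁^n + ⋯ + u_n^n)` with `a ≠ 0`, `n·b ≠ 0` and `a^n ≠ (−n·b)^n`,
the Jacobian ideal `J(w)` contains `(u₁⋯u_n)^{n−1}` and each `u_j^{n(n−1)}`, so the
Jacobian ring is a finite-dimensional vector space: `w` has an isolated singularity at `0`. -/
theorem stmt12 (k : Type*) [Field k] (n : ℕ) (hn : 1 ≤ n) (a b : k)
    (ha : a ≠ 0) (hb : (n : k) * b ≠ 0) (hab : a ^ n ≠ (-((n : k) * b)) ^ n) :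
    let w : MvPolynomial (Fin n) k :=
      MvPolynomial.C a * ∏ i, MvPolynomial.X i +
        MvPolynomial.C b * ∑ i, MvPolynomial.X i ^ n
    let J : Ideal (MvPolynomial (Fin n) k) :=
      Ideal.span (Set.range fun j => MvPolynomial.pderiv j w)
    ((∏ i, MvPolynomial.X i : MvPolynomial (Fin n) k) ^ (n - 1) ∈ J) ∧
    (∀ j : Fin n, (MvPolynomial.X j : MvPolynomial (Fin n) k) ^ (n * (n - 1)) ∈ J) ∧
    FiniteDimensional k (MvPolynomial (Fin n) k ⧸ J) := by
  intro w J
  have key := nilpotent_of_relations (R := MvPolynomial (Fin n) k ⧸ J) hn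
    hb hab (fun i => Ideal.Quotient.mk J (MvPolynomial.X i)) fun j => by
      have hj : MvPolynomial.pderiv j w ∈ J := Ideal.subset_span ⟨j, rfl⟩
      rw [pderiv_superpotential, ← Ideal.Quotient.eq_zero_iff_mem, map_add, map_mul, map_mul,
        map_prod, map_pow] at hj
      exact hj
  simp only [← map_prod, ← map_pow, Ideal.Quotient.eq_zero_iff_mem] at key
  exact ⟨key.1, key.2, finite_quotient_of_X_pow_mem J _ key.2⟩
end
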